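/- Under the hypotheses of the previous statement, with w₁ ≠ w₂ eigenvalues of PAP↾ran P, one has Re((w₁−z₁)(z̄₀−z̄₁))/|z₁−z₀|² + Re((w₂−z₁)(z̄₀−z̄₁))/|z₁−z₀|² ≤ 1. -/

import Mathlib

open ContinuousLinearMap

open scoped ComplexOrder InnerProductSpace in
/-- The key quadratic form bound. -/
theorem aux_bound {H : Type*} [NormedAddCommGroup H] [InnerProductSpace ℂ H] [CompleteSpace H]
    (A : H →L[ℂ] H) (hA : IsStarNormal A)
    (z₀ : ℂ) (φ : H) (hφ : ‖φ‖ = 1)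
    (hsimple : ∀ ψ : H, A ψ = z₀ • ψ → ∃ c : ℂ, ψ = c • φ)
    (k z₁ : ℂ) (hk : k * (z₀ - z₁) = 1)
    (hs : ∀ z ∈ spectrum ℂ A, z ≠ z₀ → (k * (z - z₁)).re ≤ 0) (x : H) :
    (k * (⟪x, A x⟫_ℂ - z₁ * ⟪x, x⟫_ℂ)).re ≤ ‖⟪φ, x⟫_ℂ‖ ^ 2 := by
  set t : ℂ → ℂ := fun z => k * (z - z₁) with ht
  set f : ℂ → ℂ := fun z => ((max 0 (t z).re : ℝ) : ℂ) with hf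
  have htc : Continuous t := by fun_prop
  have hfc : Continuous f := by fun_prop
  have hf1 : ∀ z ∈ spectrum ℂ A, z ≠ z₀ → f z = 0 := by
    intro z hz hne
    simp only [hf]
    rw [max_eq_left (hs z hz hne)]; simp
  have hf0 : f z₀ = 1 := by simp only [hf, ht, hk]; simp
  set E := cfc f A with hE
  have hT : cfc t A = k • (A - z₁ • (1 : H →L[ℂ] H)) := by
    have h1 : cfc (fun z : ℂ => z - z₁) A = A - z₁ • (1 : H →L[ℂ] H) := by
      rw [cfc_sub (fun z : ℂ => z) (fun _ => z₁) A, cfc_id' ℂ A, cfc_const z₁ A,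
        Algebra.algebraMap_eq_smul_one]
    rw [← h1, ← cfc_const_mul k (fun z : ℂ => z - z₁) A]
  have hAE : A * E = z₀ • E := by
    conv_lhs => rw [← cfc_id' ℂ A]
    rw [hE, ← cfc_mul (fun z => z) f A (by fun_prop) hfc.continuousOn,
      ← cfc_const_mul z₀ f A hfc.continuousOn]
    apply cfc_congr
    intro z hz
    by_cases h : z = z₀
    · simp [h]
    · simp [hf1 z hz h]
  have hEE : star E * E = E := by
    rw [hE, ← cfc_star, ← cfc_mul _ f A (hfc.star.continuousOn) hfc.continuousOn]
    apply cfc_congr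
    intro z hz
    by_cases h : z = z₀
    · simp [h, hf0]
    · simp [hf1 z hz h]
  have hpos : 0 ≤ (E + star E) - (cfc t A + star (cfc t A)) := by
    rw [hE, ← cfc_star, ← cfc_star,
      ← cfc_add A f _ hfc.continuousOn hfc.star.continuousOn,
      ← cfc_add A t _ htc.continuousOn htc.star.continuousOn,
      ← cfc_sub (fun x => f x + star (f x)) (fun x => t x + star (t x)) A
        (hfc.add hfc.star).continuousOn (htc.add htc.star).continuousOn]
    apply cfc_nonneg
    intro z hz
    have h := le_max_right 0 (t z).re
    rw [Complex.le_def]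
    constructor
    · simp [hf]; linarith
    · simp [hf]
  rw [ContinuousLinearMap.nonneg_iff_isPositive] at hpos
  have h2 := hpos.re_inner_nonneg_right x
  have hst : ∀ S : H →L[ℂ] H, (⟪x, (star S) x⟫_ℂ).re = (⟪x, S x⟫_ℂ).re := by
    intro S
    rw [ContinuousLinearMap.star_eq_adjoint, ContinuousLinearMap.adjoint_inner_right,
      ← inner_conj_symm, Complex.conj_re]
  have hTx : (⟪x, (cfc t A) x⟫_ℂ) = k * (⟪x, A x⟫_ℂ - z₁ * ⟪x, x⟫_ℂ) := by
    rw [hT]; simp [inner_smul_right, inner_sub_right]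
  simp only [ContinuousLinearMap.sub_apply, ContinuousLinearMap.add_apply, inner_sub_right,
    inner_add_right, RCLike.re_to_complex, Complex.sub_re, Complex.add_re, hst] at h2
  rw [hTx] at h2
  have h3 : ⟪x, E x⟫_ℂ = ((‖E x‖ ^ 2 : ℝ) : ℂ) := by
    conv_lhs => rw [← hEE]
    rw [ContinuousLinearMap.mul_apply, ContinuousLinearMap.star_eq_adjoint,
      ContinuousLinearMap.adjoint_inner_right, inner_self_eq_norm_sq_to_K]
    simp
  obtain ⟨c, hc⟩ := hsimple (E x) (by
    have := congrArg (fun S : H →L[ℂ] H => S x) hAE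
    simpa using this)
  have h4 : ‖E x‖ = ‖c‖ := by rw [hc, norm_smul, hφ, mul_one]
  have h5 : ‖c‖ ^ 2 = ‖c‖ * ‖⟪φ, x⟫_ℂ‖ := by
    have := congrArg norm h3
    rw [Complex.norm_real, h4, hc, inner_smul_right, norm_mul, norm_inner_symm] at this
    simpa using this.symm
  have h6 : (⟪x, E x⟫_ℂ).re = ‖c‖ ^ 2 := by rw [h3, h4, Complex.ofReal_re]
  rw [h6] at h2
  have h7 : ‖c‖ ^ 2 ≤ ‖⟪φ, x⟫_ℂ‖ ^ 2 := by nlinarith [sq_nonneg (‖c‖ - ‖⟪φ, x⟫_ℂ‖)]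
  linarith

open scoped InnerProductSpace in
/-- Under the hypotheses of Theorem A.2.3, with `w₁ ≠ w₂` eigenvalues of `PAP` on `ran P`,
one has `(w₁−z₁)·(z₀−z₁)/|z₁−z₀|² + (w₂−z₁)·(z₀−z₁)/|z₁−z₀|² ≤ 1`, where `x·y = Re(x ȳ)`. -/
theorem stmt_6 {H : Type*} [NormedAddCommGroup H] [InnerProductSpace ℂ H] [CompleteSpace H]
    (A : H →L[ℂ] H) (hA : IsStarNormal A)
    (z₀ : ℂ) (φ : H) (hφ : φ ≠ 0) (hAφ : A φ = z₀ • φ)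
    (hsimple : ∀ ψ : H, A ψ = z₀ • ψ → ∃ c : ℂ, ψ = c • φ)
    (C : Set ℂ) (hC : C = closure (convexHull ℝ (spectrum ℂ A \ {z₀})))
    (hCne : C.Nonempty) (hz₀C : z₀ ∉ C)
    (z₁ : ℂ) (hz₁ : z₁ ∈ C) (hz₁min : ∀ w ∈ C, ‖z₀ - z₁‖ ≤ ‖z₀ - w‖)
    (P : H →L[ℂ] H) (hPidem : P ∘L P = P) (hPsa : ContinuousLinearMap.adjoint P = P)
    (w₁ w₂ : ℂ) (hw : w₁ ≠ w₂)
    (η₁ : H) (hη₁ : η₁ ≠ 0) (hPη₁ : P η₁ = η₁) (heig₁ : P (A η₁) = w₁ • η₁)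
    (η₂ : H) (hη₂ : η₂ ≠ 0) (hPη₂ : P η₂ = η₂) (heig₂ : P (A η₂) = w₂ • η₂) :
    ((w₁ - z₁) * (starRingEnd ℂ) (z₀ - z₁)).re / ‖z₁ - z₀‖ ^ 2 +
      ((w₂ - z₁) * (starRingEnd ℂ) (z₀ - z₁)).re / ‖z₁ - z₀‖ ^ 2 ≤ 1 := by
  have hne : z₀ - z₁ ≠ 0 := by
    intro h; rw [sub_eq_zero] at h; exact hz₀C (h ▸ hz₁)
  have hconv : Convex ℝ C := by rw [hC]; exact (convex_convexHull ℝ _).closure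
  have hproj : ∀ w ∈ C, ⟪z₀ - z₁, w - z₁⟫_ℝ ≤ 0 := by
    apply (norm_eq_iInf_iff_real_inner_le_zero hconv hz₁).1
    have : Nonempty C := ⟨⟨z₁, hz₁⟩⟩
    apply le_antisymm
    · exact le_ciInf fun w => hz₁min w w.2
    · exact ciInf_le (f := fun w : C => ‖z₀ - w‖) ⟨0, by rintro _ ⟨w, rfl⟩; positivity⟩ ⟨z₁, hz₁⟩
  set n : ℝ := ‖z₁ - z₀‖ ^ 2 with hn
  have hnpos : 0 < n := by
    rw [hn, norm_sub_rev]; have := norm_pos_iff.2 hne; positivity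
  set k : ℂ := (n⁻¹ : ℝ) * (starRingEnd ℂ) (z₀ - z₁) with hkdef
  have hkre : ∀ z : ℂ, (k * z).re = (z * (starRingEnd ℂ) (z₀ - z₁)).re / n := by
    intro z
    rw [hkdef, mul_assoc, Complex.re_ofReal_mul, mul_comm z]; ring
  have hk : k * (z₀ - z₁) = 1 := by
    rw [hkdef, mul_assoc, mul_comm ((starRingEnd ℂ) _), Complex.mul_conj, Complex.normSq_eq_norm_sq,
      norm_sub_rev z₀ z₁, ← hn, ← Complex.ofReal_mul, inv_mul_cancel₀ hnpos.ne', Complex.ofReal_one]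
  have hs : ∀ z ∈ spectrum ℂ A, z ≠ z₀ → (k * (z - z₁)).re ≤ 0 := by
    intro z hz hzne
    rw [hkre]
    apply div_nonpos_of_nonpos_of_nonneg _ hnpos.le
    have := hproj z (by rw [hC]; exact subset_closure (subset_convexHull ℝ _ ⟨hz, hzne⟩))
    rwa [Complex.inner] at this
  -- normalise `φ`
  have hφn : (‖φ‖ : ℂ) ≠ 0 := by simpa using hφ
  set ψ : H := ((‖φ‖ : ℂ)⁻¹) • φ with hψ
  have hψ1 : ‖ψ‖ = 1 := by
    rw [hψ, norm_smul, norm_inv, Complex.norm_real, norm_norm, inv_mul_cancel₀ (norm_ne_zero_iff.2 hφ)]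
  have key := aux_bound A hA z₀ ψ hψ1 (fun y hy => by
    obtain ⟨c, hc⟩ := hsimple y hy
    refine ⟨c * ‖φ‖, ?_⟩
    rw [hψ, smul_smul, mul_assoc, mul_inv_cancel₀ hφn, mul_one, hc]) k z₁ hk hs
  -- orthogonalise
  set a : ℂ := ⟪η₁, η₂⟫_ℂ / ⟪η₁, η₁⟫_ℂ with ha
  have h11 : ⟪η₁, η₁⟫_ℂ ≠ 0 := inner_self_ne_zero.2 hη₁
  set ζ : H := η₂ - a • η₁ with hζ
  have horth : ⟪η₁, ζ⟫_ℂ = 0 := by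
    rw [hζ, inner_sub_right, inner_smul_right, ha, div_mul_cancel₀ _ h11, sub_self]
  have hPζ : P ζ = ζ := by rw [hζ, map_sub, map_smul, hPη₁, hPη₂]
  have hPAζ : P (A ζ) = w₂ • ζ + (a * (w₂ - w₁)) • η₁ := by
    rw [hζ, map_sub, map_smul, map_sub, map_smul, heig₁, heig₂]; module
  have hζ0 : ζ ≠ 0 := by
    intro h0
    rw [h0] at hPAζ
    simp only [map_zero, smul_zero, zero_add] at hPAζ
    have h := (smul_eq_zero.1 hPAζ.symm).resolve_right hη₁
    have ha0 : a = 0 := (mul_eq_zero.1 h).resolve_right (sub_ne_zero.2 hw.symm)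
    rw [hζ, ha0, zero_smul, sub_zero] at h0
    exact hη₂ h0
  have hcomp : ∀ x : H, P x = x → ⟪x, A x⟫_ℂ = ⟪x, P (A x)⟫_ℂ := by
    intro x hx
    rw [← ContinuousLinearMap.adjoint_inner_left P, hPsa, hx]
  have horth' : ⟪ζ, η₁⟫_ℂ = 0 := inner_eq_zero_symm.1 horth
  have hA1 : ⟪η₁, A η₁⟫_ℂ = w₁ * ⟪η₁, η₁⟫_ℂ := by
    rw [hcomp _ hPη₁, heig₁, inner_smul_right]
  have hA2 : ⟪ζ, A ζ⟫_ℂ = w₂ * ⟪ζ, ζ⟫_ℂ := by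
    rw [hcomp _ hPζ, hPAζ, inner_add_right, inner_smul_right, inner_smul_right, horth', mul_zero,
      add_zero]
  have hb : ∀ (x : H) (w : ℂ), x ≠ 0 → ⟪x, A x⟫_ℂ = w * ⟪x, x⟫_ℂ →
      ((w - z₁) * (starRingEnd ℂ) (z₀ - z₁)).re / n ≤ ‖⟪((‖x‖ : ℂ)⁻¹) • x, ψ⟫_ℂ‖ ^ 2 := by
    intro x w hx hxw
    have h := key x
    have hxp : 0 < ‖x‖ := norm_pos_iff.2 hx
    rw [hxw, ← sub_mul, ← mul_assoc, inner_self_eq_norm_sq_to_K] at h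
    have e : (k * (w - z₁) * ((‖x‖ : ℂ)) ^ 2).re = (k * (w - z₁)).re * ‖x‖ ^ 2 := by
      rw [← Complex.ofReal_pow, Complex.re_mul_ofReal]
    erw [e] at h
    rw [← hkre, inner_smul_left, norm_mul, norm_inner_symm x ψ, RCLike.norm_conj, norm_inv,
      Complex.norm_real, norm_norm, mul_pow, inv_pow, inv_mul_eq_div, le_div_iff₀ (by positivity)]
    exact h
  have hb1 := hb η₁ w₁ hη₁ hA1
  have hb2 := hb ζ w₂ hζ0 hA2
  have hn1 : ∀ x : H, x ≠ 0 → ‖((‖x‖ : ℂ)⁻¹) • x‖ = 1 := by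
    intro x hx
    rw [norm_smul, norm_inv, Complex.norm_real, norm_norm, inv_mul_cancel₀ (norm_ne_zero_iff.2 hx)]
  have hon : Orthonormal ℂ ![((‖η₁‖ : ℂ)⁻¹) • η₁, ((‖ζ‖ : ℂ)⁻¹) • ζ] := by
    constructor
    · intro i
      fin_cases i
      · exact hn1 _ hη₁
      · exact hn1 _ hζ0
    · intro i j hij
      fin_cases i <;> fin_cases j
      · exact absurd rfl hij
      · change ⟪((‖η₁‖ : ℂ)⁻¹) • η₁, ((‖ζ‖ : ℂ)⁻¹) • ζ⟫_ℂ = 0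
        rw [inner_smul_left, inner_smul_right, horth, mul_zero, mul_zero]
      · change ⟪((‖ζ‖ : ℂ)⁻¹) • ζ, ((‖η₁‖ : ℂ)⁻¹) • η₁⟫_ℂ = 0
        rw [inner_smul_left, inner_smul_right, horth', mul_zero, mul_zero]
      · exact absurd rfl hij
  have hB := hon.sum_inner_products_le ψ (s := Finset.univ)
  rw [Fin.sum_univ_two, hψ1] at hB
  simp only [Matrix.cons_val_zero, Matrix.cons_val_one] at hB
  linarith
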